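/- Let $n \ge 1$ be an integer that is not divisible by $3$, and let $\omega = -\tfrac12 + \tfrac{\sqrt3}{2}\, i \in \mathbb{H}$, where $\mathbb{H} = \{z \in \mathbb{C} : \operatorname{Im} z > 0\}$. The number of ways of writing $n = c^2 - cd + d^2$ with $c, d$ coprime positive integers (that is, the number of such ordered pairs $(c,d)$) equals the number of integers $k$ with $0 < k < 2n$, $k$ coprime to $2n$, such that the vertical line $\{k/(2n) + i t : t > 0\} \subset \mathbb{H}$ contains a point of the orbit of $\omega$ under the action of $\mathrm{SL}(2,\mathbb{Z})$ on $\mathbb{H}$ by linear fractional transformations. -/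

import Mathlib

/-- The primitive cube root of unity `ω = -1/2 + (√3/2) i` as a point of the upper half-plane. -/
noncomputable def omegaH : UpperHalfPlane :=
  ⟨⟨-1 / 2, Real.sqrt 3 / 2⟩, by
    simp only [Complex.im]
    positivity⟩

/-- The vertical line `{x + i t : t > 0}` in the upper half-plane. -/
def verticalLine (x : ℝ) : Set UpperHalfPlane :=
  {z | z.re = x}

/-- The ordered pairs of coprime positive integers `(c, d)` with `c² - c d + d² = n`. -/
def eisensteinReps (n : ℕ) : Set (ℤ × ℤ) :=
  {q | 0 < q.1 ∧ 0 < q.2 ∧ IsCoprime q.1 q.2 ∧ q.1 ^ 2 - q.1 * q.2 + q.2 ^ 2 = (n : ℤ)}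

/-- The integers `0 < k < 2n`, coprime to `2n`, such that the vertical line at `k / (2n)` contains
a point of the `SL(2, ℤ)`-orbit of `ω`. -/
def orbitLines (n : ℕ) : Set ℤ :=
  {k | 0 < k ∧ k < 2 * (n : ℤ) ∧ IsCoprime k (2 * (n : ℤ)) ∧
    (verticalLine ((k : ℝ) / (2 * (n : ℝ))) ∩
      MulAction.orbit (Matrix.SpecialLinearGroup (Fin 2) ℤ) omegaH).Nonempty}

/-- If a relation between two sets is total and unique in both directions, then the sets have
the same cardinality. -/
theorem Set.encard_eq_of_rel {α β : Type*} [Nonempty β] {s : Set α} {t : Set β} (r : α → β → Prop)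
    (hst : ∀ x ∈ s, ∃ y ∈ t, r x y) (hts : ∀ y ∈ t, ∃ x ∈ s, r x y)
    (hr : ∀ x ∈ s, ∀ y ∈ t, ∀ z ∈ t, r x y → r x z → y = z)
    (hl : ∀ x ∈ s, ∀ y ∈ s, ∀ z ∈ t, r x z → r y z → x = y) :
    s.encard = t.encard := by
  choose! f hft hfr using hst
  have hinj : Set.InjOn f s := fun x hx y hy hxy =>
    hl x hx y hy (f x) (hft x hx) (hfr x hx) (hxy ▸ hfr y hy)
  have himage : f '' s = t := by
    ext y
    constructor
    · rintro ⟨x, hx, rfl⟩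
      exact hft x hx
    · intro hy
      obtain ⟨x, hx, hxy⟩ := hts y hy
      exact ⟨x, hx, hr x hx _ (hft x hx) y hy (hfr x hx) hxy⟩
  rw [← himage, hinj.encard_image]

/-- Two integers in the interval `(0, m)` that are congruent modulo `m` are equal. -/
theorem Int.eq_of_dvd_sub_of_pos_of_lt {m x y : ℤ} (hx : 0 < x) (hxm : x < m) (hy : 0 < y)
    (hym : y < m) (h : m ∣ x - y) : x = y := by
  have := Int.eq_zero_of_abs_lt_dvd h (by rw [abs_lt]; constructor <;> linarith)
  linarith

/-- The integers `k` in `(0, 2n)` with `k² ≡ -3` modulo `4n`. -/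
def rootsNegThree (n : ℕ) : Set ℤ :=
  {k | 0 < k ∧ k < 2 * (n : ℤ) ∧ 4 * (n : ℤ) ∣ k ^ 2 + 3}

/-- The integers `k` in `(0, 2n)` with `3k² ≡ -1` modulo `4n`. -/
def rootsNegThird (n : ℕ) : Set ℤ :=
  {k | 0 < k ∧ k < 2 * (n : ℤ) ∧ 4 * (n : ℤ) ∣ 3 * k ^ 2 + 1}

/-- The pairs in `eisensteinReps n` with `d < c`. -/
def eisensteinRepsGT (n : ℕ) : Set (ℤ × ℤ) :=
  {q | q ∈ eisensteinReps n ∧ q.2 < q.1}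

/-- The pairs in `eisensteinReps n` with `c < d`. -/
def eisensteinRepsLT (n : ℕ) : Set (ℤ × ℤ) :=
  {q | q ∈ eisensteinReps n ∧ q.1 < q.2}

/-- `(c, d)` is the bottom row of an integral matrix of determinant one sending `ω` to a point
with real part `k / (2 (c² - c d + d²))`. -/
def IsBottomRowFor (c d k : ℤ) : Prop :=
  ∃ a b : ℤ, a * d - b * c = 1 ∧ 2 * (a * c + b * d - b * c) - 1 = k

theorem IsBottomRowFor.isCoprime {c d k : ℤ} (h : IsBottomRowFor c d k) : IsCoprime c d := by
  obtain ⟨a, b, hdet, -⟩ := h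
  exact ⟨-b, a, by linear_combination hdet⟩

theorem IsBottomRowFor.dvd {c d k : ℤ} (h : IsBottomRowFor c d k) :
    4 * (c ^ 2 - c * d + d ^ 2) ∣ k ^ 2 + 3 := by
  obtain ⟨a, b, hdet, rfl⟩ := h
  refine ⟨a ^ 2 - a * b + b ^ 2, ?_⟩
  linear_combination 4 * (a * c + b * d - b * c - (a * d - b * c) - 1) * hdet

theorem IsBottomRowFor.shift {c d k : ℤ} (h : IsBottomRowFor c d k) (t : ℤ) :
    IsBottomRowFor c d (k + 2 * (c ^ 2 - c * d + d ^ 2) * t) := by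
  obtain ⟨a, b, hdet, rfl⟩ := h
  exact ⟨a + t * c, b + t * d, by linear_combination hdet, by ring⟩

theorem IsBottomRowFor.rotate {c d k : ℤ} (h : IsBottomRowFor c d k) :
    IsBottomRowFor d (d - c) k := by
  obtain ⟨a, b, hdet, rfl⟩ := h
  exact ⟨b, b - a, by linear_combination hdet, by ring⟩

theorem IsBottomRowFor.neg {c d k : ℤ} (h : IsBottomRowFor c d k) :
    IsBottomRowFor (-c) (-d) k := by
  obtain ⟨a, b, hdet, rfl⟩ := h
  exact ⟨-a, -b, by linear_combination hdet, by ring⟩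

theorem exists_isBottomRowFor_of_isCoprime {c d : ℤ} (h : IsCoprime c d) :
    ∃ k, IsBottomRowFor c d k := by
  obtain ⟨u, v, huv⟩ := h
  exact ⟨_, v, -u, by linear_combination huv, rfl⟩

theorem IsBottomRowFor.dvd_sub {c d k l : ℤ} (hk : IsBottomRowFor c d k)
    (hl : IsBottomRowFor c d l) : 2 * (c ^ 2 - c * d + d ^ 2) ∣ k - l := by
  obtain ⟨a, b, hdet, rfl⟩ := hk
  obtain ⟨a', b', hdet', rfl⟩ := hl
  have h₁ : a - a' = (a' * b - a * b') * c := by linear_combination a' * hdet - a * hdet'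
  have h₂ : b - b' = (a' * b - a * b') * d := by linear_combination b' * hdet - b * hdet'
  exact ⟨a' * b - a * b', by linear_combination 2 * c * h₁ + 2 * (d - c) * h₂⟩

/-- Binary quadratic forms of discriminant `-3` are equivalent to the norm form. -/
theorem exists_isBottomRowFor (n : ℕ) : ∀ (k m : ℤ), 0 < n → k ^ 2 + 3 = 4 * n * m →
    ∃ c d : ℤ, c ^ 2 - c * d + d ^ 2 = n ∧ IsBottomRowFor c d k := by
  induction n using Nat.strong_induction_on with
  | _ n ih =>
  intro k m hn hkm
  have hn' : (0 : ℤ) < n := by exact_mod_cast hn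
  obtain ⟨k₀, t, hk, hlo, hhi⟩ : ∃ k₀ t : ℤ, k = k₀ + 2 * n * t ∧ -n ≤ k₀ ∧ k₀ ≤ n := by
    refine ⟨(k + n) % (2 * n) - n, (k + n) / (2 * n), ?_, ?_, ?_⟩
    · have := Int.emod_add_mul_ediv (k + n) (2 * n)
      linarith
    · have := Int.emod_nonneg (k + n) (b := 2 * n) (by positivity)
      linarith
    · have := Int.emod_lt_of_pos (k + n) (b := 2 * n) (by positivity)
      linarith
  obtain ⟨m₀, hm₀⟩ : ∃ m₀ : ℤ, k₀ ^ 2 + 3 = 4 * n * m₀ :=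
    ⟨m - k₀ * t - n * t ^ 2, by subst hk; linear_combination hkm⟩
  have hm₀pos : 0 < m₀ := by
    by_contra! hle
    nlinarith [sq_nonneg k₀]
  suffices ∃ c d : ℤ, c ^ 2 - c * d + d ^ 2 = n ∧ IsBottomRowFor c d k₀ by
    obtain ⟨c, d, hcd, h⟩ := this
    refine ⟨c, d, hcd, ?_⟩
    rw [hk, ← hcd]
    exact h.shift t
  have hsq : k₀ ^ 2 ≤ n ^ 2 := sq_le_sq' hlo hhi
  rcases lt_or_ge m₀ n with hlt | hge
  · lift m₀ to ℕ using hm₀pos.le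
    obtain ⟨c, d, hcd, a, b, hdet, hk₀⟩ :=
      ih m₀ (by exact_mod_cast hlt) (-k₀) n (by exact_mod_cast hm₀pos)
        (by linear_combination hm₀)
    refine ⟨-a, -b, ?_, c, d, by linear_combination hdet, ?_⟩
    · have hm : (m₀ : ℤ) ≠ 0 := hm₀pos.ne'
      apply mul_left_cancel₀ (mul_ne_zero four_ne_zero hm)
      linear_combination (-4 * (a ^ 2 - a * b + b ^ 2)) * hcd
        - 4 * (a * c + b * d - b * c - (a * d - b * c) - 1) * hdet + hm₀
        + (2 * (a * c + b * d - b * c) - 1 - k₀) * hk₀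
    · linear_combination (-1 : ℤ) * hk₀ + 2 * hdet
  · have hn1 : (n : ℤ) = 1 := by nlinarith
    have hk₀ : k₀ = 1 ∨ k₀ = -1 := by
      have : k₀ ≠ 0 := by
        rintro rfl
        rw [hn1] at hm₀
        omega
      omega
    rcases hk₀ with rfl | rfl
    · exact ⟨1, 1, by rw [hn1]; norm_num, 1, 0, by norm_num, by norm_num⟩
    · exact ⟨0, 1, by rw [hn1]; norm_num, 1, 0, by norm_num, by norm_num⟩

theorem eisenstein_unit_cases {p q : ℤ} (h : p ^ 2 - p * q + q ^ 2 = 1) :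
    (p = 1 ∧ q = 0) ∨ (p = 1 ∧ q = 1) ∨ (p = 0 ∧ q = 1) ∨ (p = -1 ∧ q = 0) ∨
      (p = -1 ∧ q = -1) ∨ (p = 0 ∧ q = -1) := by
  have hp : p ≤ 1 := by nlinarith [sq_nonneg (2 * q - p)]
  have hp' : -1 ≤ p := by nlinarith [sq_nonneg (2 * q - p)]
  have hq : q ≤ 1 := by nlinarith [sq_nonneg (2 * p - q)]
  have hq' : -1 ≤ q := by nlinarith [sq_nonneg (2 * p - q)]
  interval_cases p <;> interval_cases q <;> simp_all

/-- Two bottom rows of the same norm with the same `k` differ by a unit `p + q ω` of the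
Eisenstein integers. -/
theorem IsBottomRowFor.exists_unit {c d c' d' k : ℤ} (h : IsBottomRowFor c d k)
    (h' : IsBottomRowFor c' d' k) (hpos : 0 < c ^ 2 - c * d + d ^ 2)
    (hnorm : c' ^ 2 - c' * d' + d' ^ 2 = c ^ 2 - c * d + d ^ 2) :
    ∃ p q : ℤ, p ^ 2 - p * q + q ^ 2 = 1 ∧ c' = p * c + q * d - q * c ∧ d' = p * d - q * c := by
  obtain ⟨a, b, hdet, hk⟩ := h
  obtain ⟨a', b', hdet', hk'⟩ := h'
  have hre : a * c + b * d - b * c = a' * c' + b' * d' - b' * c' := by linarith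
  have h₁ : b * d' - a * c' = b' * d - a' * c := by
    apply mul_left_cancel₀ hpos.ne'
    linear_combination (d * d' - c * c') * hre
      - (c * d' + d * c' - c * c') * (hdet - hdet') + (b' * d - a' * c) * hnorm
  have h₂ : a * d' + b * c' - a * c' = a' * d + b' * c - a' * c := by
    apply mul_left_cancel₀ hpos.ne'
    linear_combination (d * d' - c * c' - (c * d' + d * c' - c * c')) * (hdet - hdet')
      + (c * d' + d * c' - c * c') * hre + (a' * d + b' * c - a' * c) * hnorm
  have hc : c' = (d * a' - b * c' - d * b' + b * d') * c + (b * d' - d * b') * d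
      - (b * d' - d * b') * c := by
    linear_combination -(d * h₁ + c' * hdet)
  have hd : d' = (d * a' - b * c' - d * b' + b * d') * d - (b * d' - d * b') * c := by
    linear_combination -(d * (h₁ - h₂) + d' * hdet)
  refine ⟨_, _, ?_, hc, hd⟩
  apply mul_left_cancel₀ hpos.ne'
  rw [mul_one]
  generalize d * a' - b * c' - d * b' + b * d' = p at *
  generalize b * d' - d * b' = q at *
  rw [hc, hd] at hnorm
  linear_combination hnorm

theorem eisensteinRepsGT_encard_eq (n : ℕ) (hn : 1 < n) :
    (eisensteinRepsGT n).encard = (rootsNegThree n).encard := by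
  have hn' : (1 : ℤ) < n := by exact_mod_cast hn
  refine Set.encard_eq_of_rel (fun q k => IsBottomRowFor q.1 q.2 k) ?_ ?_ ?_ ?_
  · rintro ⟨c, d⟩ ⟨⟨hc, hd, hcop, hN⟩, hlt⟩
    simp only at hc hd hcop hN hlt
    obtain ⟨k, hk⟩ := exists_isBottomRowFor_of_isCoprime hcop
    have hs := hk.shift (-(k / (2 * n)))
    have hkmod : k + 2 * (c ^ 2 - c * d + d ^ 2) * (-(k / (2 * n))) = k % (2 * n) := by
      rw [hN]
      have := Int.emod_add_mul_ediv k (2 * n)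
      linarith
    rw [hkmod] at hs
    have hdvd := hs.dvd
    rw [hN] at hdvd
    refine ⟨k % (2 * n), ⟨?_, Int.emod_lt_of_pos _ (by positivity), hdvd⟩, hs⟩
    refine lt_of_le_of_ne (Int.emod_nonneg _ (by positivity)) ?_
    intro h0
    obtain ⟨a, b, -, hab⟩ := hs
    omega
  · rintro k ⟨hk0, hkn, m, hm⟩
    obtain ⟨c, d, hN, h⟩ := exists_isBottomRowFor n k m (by omega) hm
    have key : ∀ x y : ℤ, x ^ 2 - x * y + y ^ 2 = n → IsBottomRowFor x y k → 0 < y → y < x →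
        ∃ q ∈ eisensteinRepsGT n, IsBottomRowFor q.1 q.2 k := fun x y hxy hb hy hyx =>
      ⟨(x, y), ⟨⟨hy.trans hyx, hy, hb.isCoprime, hxy⟩, hyx⟩, hb⟩
    have hunit : ∀ x y : ℤ, IsBottomRowFor x y k → x ^ 2 - x * y + y ^ 2 = n → y ≠ 0 := by
      rintro x y hb hxy rfl
      have := Int.isUnit_iff.1 (isCoprime_zero_right.1 hb.isCoprime)
      rcases this with rfl | rfl <;> norm_num at hxy <;> omega
    have upper : ∀ x y : ℤ, x ^ 2 - x * y + y ^ 2 = n → IsBottomRowFor x y k → 0 < y →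
        ∃ q ∈ eisensteinRepsGT n, IsBottomRowFor q.1 q.2 k := by
      intro x y hxy hb hy
      have hN₁ : y ^ 2 - y * (y - x) + (y - x) ^ 2 = n := by linear_combination hxy
      have hN₂ : (y - x) ^ 2 - (y - x) * (y - x - y) + (y - x - y) ^ 2 = n := by
        linear_combination hxy
      have hne₁ := hunit _ _ hb.rotate hN₁
      have hne₂ := hunit _ _ hb.rotate.rotate hN₂
      rcases lt_trichotomy x y with hlt | heq | hgt
      · rcases lt_trichotomy x 0 with hx | hx | hx
        · exact key _ _ hN₂ hb.rotate.rotate (by omega) (by omega)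
        · omega
        · exact key _ _ hN₁ hb.rotate (by omega) (by omega)
      · omega
      · exact key _ _ hxy hb hy hgt
    rcases lt_trichotomy d 0 with hd | hd | hd
    · exact upper (-c) (-d) (by linear_combination hN) h.neg (by omega)
    · exact absurd hd (hunit _ _ h hN)
    · exact upper c d hN h hd
  · rintro ⟨c, d⟩ ⟨⟨-, -, -, hN⟩, -⟩ k ⟨hk, hkn, -⟩ l ⟨hl, hln, -⟩ hck hcl
    have := hck.dvd_sub hcl
    simp only at hN this
    rw [hN] at this
    exact Int.eq_of_dvd_sub_of_pos_of_lt hk hkn hl hln this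
  · rintro ⟨c, d⟩ ⟨⟨hc, hd, -, hN⟩, hlt⟩ ⟨c', d'⟩ ⟨⟨hc', hd', -, hN'⟩, hlt'⟩ k - h h'
    simp only at hc hd hN hlt hc' hd' hN' hlt' h h'
    obtain ⟨p, q, hpq, hcc, hdd⟩ := h.exists_unit h' (by omega) (by rw [hN, hN'])
    rcases eisenstein_unit_cases hpq with ⟨rfl, rfl⟩ | ⟨rfl, rfl⟩ | ⟨rfl, rfl⟩ | ⟨rfl, rfl⟩ |
      ⟨rfl, rfl⟩ | ⟨rfl, rfl⟩
    · ext <;> simp only <;> linarith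
    all_goals omega

theorem eisensteinRepsLT_encard_eq (n : ℕ) :
    (eisensteinRepsLT n).encard = (eisensteinRepsGT n).encard := by
  rw [← Prod.swap_injective.encard_image (eisensteinRepsGT n)]
  congr 1
  ext ⟨c, d⟩
  simp only [eisensteinRepsLT, eisensteinRepsGT, eisensteinReps, Set.mem_ofPred_eq,
    Set.image_swap_eq_preimage_swap, Set.mem_preimage, Prod.swap_prod_mk]
  rw [isCoprime_comm, show c ^ 2 - c * d + d ^ 2 = d ^ 2 - d * c + c ^ 2 by ring]
  tauto

theorem isCoprime_three_natCast {n : ℕ} (h3 : ¬ 3 ∣ n) : IsCoprime (3 : ℤ) n := by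
  have := (Nat.Prime.coprime_iff_not_dvd Nat.prime_three).2 h3
  exact_mod_cast Nat.isCoprime_iff_coprime.2 this

theorem odd_of_four_mul_dvd {n k : ℤ} (h : 4 * n ∣ k ^ 2 + 3) : Odd k := by
  obtain ⟨m, hm⟩ := h
  by_contra hodd
  obtain ⟨j, rfl⟩ := Int.not_odd_iff_even.1 hodd
  have : 2 * (2 * (n * m) - 2 * j ^ 2) = 3 := by linear_combination (-1 : ℤ) * hm
  omega

theorem rootsNegThird_encard_eq (n : ℕ) (hn : 0 < n) (h3 : ¬ 3 ∣ n) :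
    (rootsNegThird n).encard = (rootsNegThree n).encard := by
  have hn' : (0 : ℤ) < n := by exact_mod_cast hn
  have hcop2 : IsCoprime (2 * (n : ℤ)) 3 :=
    (IsCoprime.mul_right (by norm_num) (isCoprime_three_natCast h3)).symm
  have hcop4 : IsCoprime (4 * (n : ℤ)) 3 :=
    (IsCoprime.mul_right (by norm_num) (isCoprime_three_natCast h3)).symm
  have iff_of : ∀ l k : ℤ, 2 * (n : ℤ) ∣ 3 * l - k →
      (4 * (n : ℤ) ∣ 3 * l ^ 2 + 1 ↔ 4 * (n : ℤ) ∣ k ^ 2 + 3) := by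
    rintro l k ⟨s, hs⟩
    obtain rfl : k = 3 * l - 2 * n * s := by linarith
    have : (3 * l - 2 * n * s) ^ 2 + 3
        = 3 * (3 * l ^ 2 + 1) + 4 * n * (n * s ^ 2 - 3 * l * s) := by ring
    rw [this, dvd_add_left (dvd_mul_right _ _)]
    exact ⟨fun h => h.mul_left 3, fun h => hcop4.dvd_of_dvd_mul_left h⟩
  refine Set.encard_eq_of_rel (fun l k => 2 * (n : ℤ) ∣ 3 * l - k) ?_ ?_ ?_ ?_
  · rintro l ⟨hl, hln, hdvd⟩
    have hmod : 2 * (n : ℤ) ∣ 3 * l - (3 * l) % (2 * n) := Int.dvd_self_sub_emod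
    have hk := (iff_of l _ hmod).1 hdvd
    refine ⟨_, ⟨?_, Int.emod_lt_of_pos _ (by positivity), hk⟩, hmod⟩
    refine lt_of_le_of_ne (Int.emod_nonneg _ (by positivity)) fun h0 => ?_
    rw [← h0] at hk
    exact absurd (odd_of_four_mul_dvd hk) (by decide)
  · rintro k ⟨hk, hkn, hdvd⟩
    obtain ⟨u, v, huv⟩ := hcop2
    have hmod : 2 * (n : ℤ) ∣ 3 * ((v * k) % (2 * n)) - k := by
      refine ⟨-u * k - 3 * (v * k / (2 * n)), ?_⟩
      linear_combination 3 * Int.emod_add_mul_ediv (v * k) (2 * n) + k * huv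
    have hl := (iff_of _ k hmod).2 hdvd
    refine ⟨_, ⟨?_, Int.emod_lt_of_pos _ (by positivity), hl⟩, hmod⟩
    refine lt_of_le_of_ne (Int.emod_nonneg _ (by positivity)) fun h0 => ?_
    rw [← h0] at hl
    obtain ⟨m, hm⟩ := hl
    have : 2 * (2 * (n * m)) = 1 := by linear_combination (-1 : ℤ) * hm
    omega
  · rintro l - k ⟨hk, hkn, -⟩ k' ⟨hk', hkn', -⟩ h h'
    refine Int.eq_of_dvd_sub_of_pos_of_lt hk hkn hk' hkn' ?_
    have := dvd_sub h' h
    rwa [sub_sub_sub_cancel_left] at this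
  · rintro l ⟨hl, hln, -⟩ l' ⟨hl', hln', -⟩ k - h h'
    refine Int.eq_of_dvd_sub_of_pos_of_lt hl hln hl' hln' ?_
    have := dvd_sub h h'
    rw [sub_sub_sub_cancel_right, ← mul_sub] at this
    exact hcop2.dvd_of_dvd_mul_left this

theorem eisenstein_norm_pos {c d : ℤ} (h : IsCoprime c d) : 0 < c ^ 2 - c * d + d ^ 2 := by
  have : c ≠ 0 ∨ d ≠ 0 := h.ne_zero_or_ne_zero
  rcases this with h | h
  · have := pow_pos (abs_pos.2 h) 2
    rw [sq_abs] at this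
    nlinarith [sq_nonneg (2 * d - c)]
  · have := pow_pos (abs_pos.2 h) 2
    rw [sq_abs] at this
    nlinarith [sq_nonneg (2 * c - d)]

theorem re_smul_omegaH (g : Matrix.SpecialLinearGroup (Fin 2) ℤ) :
    (g • omegaH).re = ((2 * (g 0 0 * g 1 0 + g 0 1 * g 1 1 - g 0 1 * g 1 0) - 1 : ℤ) : ℝ) /
      (2 * ((g 1 0 ^ 2 - g 1 0 * g 1 1 + g 1 1 ^ 2 : ℤ) : ℝ)) := by
  have hdet : (g 0 0 : ℝ) * g 1 1 - g 0 1 * g 1 0 = 1 := by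
    have := g.det_coe
    rw [Matrix.det_fin_two] at this
    exact_mod_cast this
  have hsq : √(3 : ℝ) * √3 = 3 := Real.mul_self_sqrt (by norm_num)
  have hpos : (0 : ℝ) < (g 1 0 : ℝ) ^ 2 - g 1 0 * g 1 1 + (g 1 1 : ℝ) ^ 2 := by
    have hcop : IsCoprime (g 1 0) (g 1 1) :=
      ⟨-g 0 1, g 0 0, by exact_mod_cast (by linear_combination hdet :
        (-g 0 1 : ℝ) * g 1 0 + g 0 0 * g 1 1 = 1)⟩
    exact_mod_cast eisenstein_norm_pos hcop
  have hnormSq : Complex.normSq ((g 1 0 : ℂ) * omegaH + g 1 1)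
      = (g 1 0 : ℝ) ^ 2 - g 1 0 * g 1 1 + (g 1 1 : ℝ) ^ 2 := by
    simp [Complex.normSq_apply, omegaH]
    linear_combination (g 1 0 : ℝ) ^ 2 / 4 * hsq
  rw [← UpperHalfPlane.coe_re, UpperHalfPlane.coe_specialLinearGroup_apply]
  simp only [algebraMap_int_eq, eq_intCast, Complex.ofReal_intCast]
  push_cast
  rw [Complex.div_re, hnormSq, ← add_div, div_eq_div_iff hpos.ne' (by positivity)]
  simp [omegaH]
  linear_combination ((g 1 0 : ℝ) ^ 2 - g 1 0 * g 1 1 + (g 1 1 : ℝ) ^ 2) *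
    ((g 0 0 : ℝ) * g 1 0 / 2 * hsq - hdet)

theorem verticalLine_inter_orbit_nonempty_iff (x : ℝ) :
    (verticalLine x ∩
      MulAction.orbit (Matrix.SpecialLinearGroup (Fin 2) ℤ) omegaH).Nonempty ↔
    ∃ c d k : ℤ, IsBottomRowFor c d k ∧ x = k / (2 * ((c ^ 2 - c * d + d ^ 2 : ℤ) : ℝ)) := by
  constructor
  · rintro ⟨_, hx, g, rfl⟩
    refine ⟨g 1 0, g 1 1, _, ⟨g 0 0, g 0 1, ?_, rfl⟩, ?_⟩
    · have := g.det_coe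
      rwa [Matrix.det_fin_two] at this
    · exact hx.symm.trans (re_smul_omegaH g)
  · rintro ⟨c, d, _, ⟨a, b, hdet, rfl⟩, rfl⟩
    let g : Matrix.SpecialLinearGroup (Fin 2) ℤ :=
      ⟨!![a, b; c, d], by rw [Matrix.det_fin_two_of]; exact hdet⟩
    exact ⟨g • omegaH, re_smul_omegaH g, g, rfl⟩

theorem orbitLines_eq_union (n : ℕ) (hn : 0 < n) (h3 : ¬ 3 ∣ n) :
    orbitLines n = rootsNegThree n ∪ rootsNegThird n := by
  have hn' : (0 : ℤ) < n := by exact_mod_cast hn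
  have hnR : (0 : ℝ) < n := by exact_mod_cast hn
  ext k
  simp only [orbitLines, rootsNegThree, rootsNegThird, Set.mem_ofPred_eq, Set.mem_union,
    verticalLine_inter_orbit_nonempty_iff]
  constructor
  · rintro ⟨hk, hkn, hcop, c, d, K, hb, hx⟩
    have hNpos := eisenstein_norm_pos hb.isCoprime
    obtain ⟨e, he⟩ := hb.dvd
    generalize c ^ 2 - c * d + d ^ 2 = N at *
    have hNR : (0 : ℝ) < N := by exact_mod_cast hNpos
    have hcross : k * N = K * n := by
      rw [div_eq_div_iff (by positivity) (by positivity)] at hx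
      have : (k : ℝ) * N = K * n := by linarith
      exact_mod_cast this
    have hcopn : IsCoprime (n : ℤ) k := (IsCoprime.of_mul_right_right hcop).symm
    obtain ⟨t, rfl⟩ : (n : ℤ) ∣ N := hcopn.dvd_of_dvd_mul_left ⟨K, by linarith⟩
    obtain rfl : K = k * t := by
      apply mul_right_cancel₀ hn'.ne'
      linear_combination -hcross
    have ht : 0 < t := pos_of_mul_pos_right hNpos hn'.le
    have ht3 : t ∣ 3 := ⟨4 * n * e - k ^ 2 * t, by linear_combination he⟩
    have htle := Int.le_of_dvd (by norm_num) ht3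
    have ht2 : t ≠ 2 := by
      rintro rfl
      norm_num at ht3
    obtain rfl | rfl : t = 1 ∨ t = 3 := by omega
    · exact Or.inl ⟨hk, hkn, e, by linear_combination he⟩
    · exact Or.inr ⟨hk, hkn, e, by linarith⟩
  · rintro (⟨hk, hkn, m, hm⟩ | ⟨hk, hkn, m, hm⟩)
    · refine ⟨hk, hkn, IsCoprime.mul_right ?_ ?_, ?_⟩
      · obtain ⟨j, rfl⟩ := odd_of_four_mul_dvd ⟨m, hm⟩
        exact ⟨1, -j, by ring⟩
      · obtain ⟨u, v, huv⟩ := isCoprime_three_natCast h3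
        exact ⟨-u * k, v + 4 * u * m, by linear_combination huv - u * hm⟩
      · obtain ⟨c, d, hN, hb⟩ := exists_isBottomRowFor n k m hn hm
        exact ⟨c, d, k, hb, by rw [hN]; push_cast; rfl⟩
    · refine ⟨hk, hkn, ⟨-3 * k, 2 * m, by linear_combination -hm⟩, ?_⟩
      obtain ⟨c, d, hN, hb⟩ := exists_isBottomRowFor (3 * n) (3 * k) m (by omega)
        (by push_cast; linear_combination 3 * hm)
      refine ⟨c, d, 3 * k, hb, ?_⟩
      rw [hN]
      push_cast
      field_simp

theorem disjoint_rootsNegThree_rootsNegThird (n : ℕ) (hn : 1 < n) :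
    Disjoint (rootsNegThree n) (rootsNegThird n) := by
  rw [Set.disjoint_left]
  rintro k ⟨-, -, m, hm⟩ ⟨-, -, hdvd⟩
  have h8 : 4 * (n : ℤ) ∣ 8 := by
    have := dvd_sub (Dvd.intro m hm.symm |>.mul_left 3) hdvd
    rwa [show 3 * (k ^ 2 + 3) - (3 * k ^ 2 + 1) = 8 by ring] at this
  have hle := Int.le_of_dvd (by norm_num) h8
  obtain rfl : n = 2 := by omega
  obtain ⟨j, rfl⟩ := odd_of_four_mul_dvd ⟨m, hm⟩
  obtain ⟨i, hi⟩ := Int.even_mul_succ_self j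
  have : 8 * (m - i) = 4 := by push_cast at hm; linear_combination 4 * hi - hm
  omega

theorem eisensteinReps_eq_union (n : ℕ) (hn : 1 < n) :
    eisensteinReps n = eisensteinRepsGT n ∪ eisensteinRepsLT n := by
  ext ⟨c, d⟩
  simp only [eisensteinRepsGT, eisensteinRepsLT, Set.mem_union, Set.mem_ofPred_eq]
  constructor
  · intro h
    rcases lt_trichotomy c d with hlt | rfl | hgt
    · exact Or.inr ⟨h, hlt⟩
    · obtain ⟨hc, -, hcop, hN⟩ := h
      simp only at hc hcop hN
      rcases Int.isUnit_iff.1 (isCoprime_self.1 hcop) with rfl | rfl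
      · norm_num at hN
        omega
      · omega
    · exact Or.inl ⟨h, hgt⟩
  · rintro (h | h) <;> exact h.1

theorem disjoint_eisensteinRepsGT_eisensteinRepsLT (n : ℕ) :
    Disjoint (eisensteinRepsGT n) (eisensteinRepsLT n) := by
  rw [Set.disjoint_left]
  rintro q ⟨-, h⟩ ⟨-, h'⟩
  exact lt_asymm h h'

theorem eisensteinReps_one : eisensteinReps 1 = {(1, 1)} := by
  ext ⟨c, d⟩
  simp only [eisensteinReps, Set.mem_ofPred_eq, Set.mem_singleton_iff, Prod.mk.injEq]
  constructor
  · rintro ⟨hc, hd, -, hN⟩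
    have := eisenstein_unit_cases (by exact_mod_cast hN)
    omega
  · rintro ⟨rfl, rfl⟩
    exact ⟨one_pos, one_pos, isCoprime_one_left, by norm_num⟩

theorem orbitLines_one : orbitLines 1 = {1} := by
  rw [orbitLines_eq_union 1 one_pos (by norm_num)]
  ext k
  simp only [rootsNegThree, rootsNegThird, Set.mem_ofPred_eq, Set.mem_union,
    Set.mem_singleton_iff]
  constructor
  · rintro (⟨h, h', -⟩ | ⟨h, h', -⟩) <;> omega
  · rintro rfl
    norm_num

theorem count_eisenstein_norm_eq_count_orbit_lines (n : ℕ) (hn : 0 < n) (h3 : ¬ 3 ∣ n) :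
    (eisensteinReps n).encard = (orbitLines n).encard := by
  obtain rfl | hn1 : n = 1 ∨ 1 < n := by omega
  · rw [eisensteinReps_one, orbitLines_one, Set.encard_singleton, Set.encard_singleton]
  · rw [eisensteinReps_eq_union n hn1, orbitLines_eq_union n hn h3,
      Set.encard_union_eq (disjoint_eisensteinRepsGT_eisensteinRepsLT n),
      Set.encard_union_eq (disjoint_rootsNegThree_rootsNegThird n hn1),
      eisensteinRepsLT_encard_eq, eisensteinRepsGT_encard_eq n hn1,
      rootsNegThird_encard_eq n hn h3]
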